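/- Let a > 0 and let F : ℝ → ℂ be continuous on (−a, a) and positive definite on (0, a). Then for all smooth compactly supported φ, ψ : ℝ → ℂ with supports contained in (0, a), ∫_0^a ∫_0^a ( conj(φ'(x)) · ψ(y) + conj(φ(x)) · ψ'(y) ) · F(x − y) dx dy = 0. (This is the skew-symmetry of the operator D^{(F)} : F_φ ↦ F_{φ'} on the reproducing kernel Hilbert space H_F.) -/

import Mathlib

open MeasureTheory Complex

noncomputable section

/-- `F` is positive definite on `Ω ⊆ ℝ`. -/
def PosDefOn (Ω : Set ℝ) (F : ℝ → ℂ) : Prop :=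
  ∀ (N : ℕ) (x : Fin N → ℝ) (c : Fin N → ℂ), (∀ i, x i ∈ Ω) →
    (∑ i, ∑ j, (starRingEnd ℂ) (c i) * c j * F (x i - x j)).im = 0 ∧
    0 ≤ (∑ i, ∑ j, (starRingEnd ℂ) (c i) * c j * F (x i - x j)).re

theorem stmt_17 (a : ℝ) (ha : 0 < a) (F : ℝ → ℂ)
    (hFc : ContinuousOn F (Set.Ioo (-a) a))
    (hpd : PosDefOn (Set.Ioo 0 a) F) :
    ∀ φ ψ : ℝ → ℂ,
      ContDiff ℝ (⊤ : ℕ∞) φ → HasCompactSupport φ → tsupport φ ⊆ Set.Ioo 0 a →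
      ContDiff ℝ (⊤ : ℕ∞) ψ → HasCompactSupport ψ → tsupport ψ ⊆ Set.Ioo 0 a →
      (∫ x in Set.Ioo (0 : ℝ) a, ∫ y in Set.Ioo (0 : ℝ) a,
        ((starRingEnd ℂ) (deriv φ x) * ψ y + (starRingEnd ℂ) (φ x) * deriv ψ y) *
          F (x - y)) = 0 := by
  intro φ ψ hφ hφc hφs hψ hψc hψs
  clear hpd
  set S : Set ℝ := (fun p : ℝ × ℝ => p.1 - p.2) '' (tsupport φ ×ˢ tsupport ψ) with hS
  have hSc : IsCompact S := by
    have h1 : IsCompact (tsupport φ) := hφc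
    have h2 : IsCompact (tsupport ψ) := hψc
    exact (h1.prod h2).image (by fun_prop)
  have hSs : S ⊆ Set.Ioo (-a) a := by
    rintro _ ⟨⟨x, y⟩, ⟨hx, hy⟩, rfl⟩
    have h1 := hφs hx
    have h2 := hψs hy
    simp only [Set.mem_Ioo] at h1 h2 ⊢
    constructor <;> linarith [h1.1, h1.2, h2.1, h2.2]
  set G : ℝ → ℂ := S.indicator F with hG
  have hGi : Integrable G :=
    (integrable_indicator_iff hSc.measurableSet).2
      ((hFc.mono hSs).integrableOn_compact hSc)
  have hφ0 : ∀ x, x ∉ tsupport φ → φ x = 0 := fun x hx => image_eq_zero_of_notMem_tsupport hx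
  have hψ0 : ∀ x, x ∉ tsupport ψ → ψ x = 0 := fun x hx => image_eq_zero_of_notMem_tsupport hx
  have hφ0' : ∀ x, x ∉ tsupport φ → deriv φ x = 0 := fun x hx => by
    by_contra h
    exact hx (support_deriv_subset h)
  have hψ0' : ∀ x, x ∉ tsupport ψ → deriv ψ x = 0 := fun x hx => by
    by_contra h
    exact hx (support_deriv_subset h)
  have hφd : Continuous (deriv φ) := hφ.continuous_deriv (by simp)
  have hψd : Continuous (deriv ψ) := hψ.continuous_deriv (by simp)
  have hφD : Differentiable ℝ φ := hφ.differentiable (by simp)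
  have hψD : Differentiable ℝ ψ := hψ.differentiable (by simp)
  set H : ℝ → ℝ → ℂ := fun x y =>
    (starRingEnd ℂ) (deriv φ x) * ψ y + (starRingEnd ℂ) (φ x) * deriv ψ y with hH
  have hFG : ∀ x y, H x y * F (x - y) = H x y * G (x - y) := by
    intro x y
    by_cases hx : x ∈ tsupport φ
    · by_cases hy : y ∈ tsupport ψ
      · have : x - y ∈ S := ⟨(x, y), ⟨hx, hy⟩, rfl⟩
        simp [hG, Set.indicator_of_mem this]
      · simp [hH, hψ0 y hy, hψ0' y hy]
    · simp [hH, hφ0 x hx, hφ0' x hx]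
  have hin : ∀ x, (∫ y in Set.Ioo (0 : ℝ) a, H x y * F (x - y))
      = ∫ u, H x (x - u) * G u := by
    intro x
    rw [setIntegral_eq_integral_of_forall_compl_eq_zero]
    · simp_rw [hFG]
      rw [← integral_sub_left_eq_self (fun u => H x (x - u) * G u) volume x]
      simp
    · intro y hy
      have : y ∉ tsupport ψ := fun h => hy (hψs h)
      simp [hH, hψ0 y this, hψ0' y this]
  change (∫ x in Set.Ioo (0 : ℝ) a, ∫ y in Set.Ioo (0 : ℝ) a, H x y * F (x - y)) = 0
  simp_rw [hin]
  rw [setIntegral_eq_integral_of_forall_compl_eq_zero]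
  swap
  · intro x hx
    have : x ∉ tsupport φ := fun h => hx (hφs h)
    simp [hH, hφ0 x this, hφ0' x this]
  have key : ∀ A B : ℝ → ℂ, Continuous A → Continuous B → HasCompactSupport A →
      HasCompactSupport B →
      Integrable (fun p : ℝ × ℝ => (starRingEnd ℂ) (A p.1) * B (p.1 - p.2) * G p.2)
        (volume.prod volume) := by
    intro A B hA hB hAc hBc
    obtain ⟨C, hC⟩ := hBc.exists_bound_of_continuous hB
    have hAi : Integrable (fun x => (starRingEnd ℂ) (A x)) :=
      (Complex.continuous_conj.comp hA).integrable_of_hasCompactSupport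
        (hAc.comp_left (g := starRingEnd ℂ) (by simp))
    have h1 := hAi.mul_prod hGi
    have h2 := h1.bdd_mul (f := fun p : ℝ × ℝ => B (p.1 - p.2)) (c := C)
      (by fun_prop) (Filter.Eventually.of_forall fun p => hC _)
    refine h2.congr (Filter.Eventually.of_forall fun p => ?_)
    simp only
    ring
  have hint : Integrable (Function.uncurry fun x u => H x (x - u) * G u)
      (volume.prod volume) := by
    refine ((key _ _ hφd hψ.continuous hφc.deriv hψc).add
      (key _ _ hφ.continuous hψd hφc hψc.deriv)).congr (Filter.Eventually.of_forall fun p => ?_)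
    simp only [hH, Function.uncurry, Pi.add_apply]
    ring
  rw [integral_integral_swap hint]
  have hz : ∀ u, ∫ x, H x (x - u) * G u = 0 := by
    intro u
    rw [integral_mul_const]
    have hcont : Continuous fun x => H x (x - u) := by
      have := hφ.continuous
      have := hψ.continuous
      simp only [hH]
      fun_prop
    have hz0 : ∀ x, x ∉ tsupport φ → H x (x - u) = 0 := by
      intro x hx
      simp [hH, hφ0 x hx, hφ0' x hx]
    have h1 : Integrable fun x => H x (x - u) :=
      hcont.integrable_of_hasCompactSupport (HasCompactSupport.intro hφc hz0)
    have h2 : Integrable fun x => (starRingEnd ℂ) (φ x) * ψ (x - u) := by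
      refine Continuous.integrable_of_hasCompactSupport ?_ (HasCompactSupport.intro hφc ?_)
      · have := hφ.continuous
        have := hψ.continuous
        fun_prop
      · intro x hx
        simp [hφ0 x hx]
    have h3 : ∀ x, HasDerivAt (fun x => (starRingEnd ℂ) (φ x) * ψ (x - u)) (H x (x - u)) x := by
      intro x
      have e1 : HasDerivAt (fun x => (starRingEnd ℂ) (φ x)) ((starRingEnd ℂ) (deriv φ x)) x :=
        (hφD x).hasDerivAt.star
      have e2 : HasDerivAt (fun x => ψ (x - u)) (deriv ψ (x - u)) x :=
        (hψD (x - u)).hasDerivAt.comp_sub_const x u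
      exact e1.mul e2
    rw [integral_eq_zero_of_hasDerivAt_of_integrable h3 h1 h2, zero_mul]
  simp [hz]
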